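/- Let Γ be a lattice in G = PSL(2,ℂ). Then the collection {xH : x ∈ Γ\G and xH is closed in Γ\G} of closed H-orbits is a countable collection of subsets of Γ\G. (This is the homogeneous formulation of the statement that a hyperbolic 3-manifold of finite volume contains at most countably many properly immersed geodesic planes.) -/

import Mathlib

open scoped MatrixGroups
open Matrix Filter

noncomputable section

/-- `SL(2,ℂ)`. -/
abbrev SL2C := Matrix.SpecialLinearGroup (Fin 2) ℂ

instance : TopologicalSpace SL2C := instTopologicalSpaceSubtype

/-- `G = PSL(2,ℂ) = SL(2,ℂ)/{±I}`, with the quotient topology. -/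
abbrev PSL2C := Matrix.ProjectiveSpecialLinearGroup (Fin 2) ℂ

/-- The projection `π : SL(2,ℂ) → PSL(2,ℂ)`. -/
def pr : SL2C →* PSL2C := QuotientGroup.mk' _

/-- The upper triangular unipotent matrix `[[1, t],[0, 1]]` as an element of `SL(2,ℂ)`. -/
def uMat (t : ℂ) : SL2C := ⟨!![1, t; 0, 1], by simp [Matrix.det_fin_two_of]⟩

/-- `u_t = π [[1, t],[0, 1]]` for `t ∈ ℝ`. -/
def uu (t : ℝ) : PSL2C := pr (uMat t)

/-- `v_s = π [[1, is],[0, 1]]` for `s ∈ ℝ`. -/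
def vv (s : ℝ) : PSL2C := pr (uMat (s * Complex.I))

/-- The subgroup `U = {u_t : t ∈ ℝ}` as a subset of `PSL(2,ℂ)`. -/
def Uset : Set PSL2C := Set.range uu

/-- The subgroup `V = {v_s : s ∈ ℝ}` as a subset of `PSL(2,ℂ)`. -/
def Vset : Set PSL2C := Set.range vv

/-- The subgroup `N = {π [[1, z],[0,1]] : z ∈ ℂ}` as a subset of `PSL(2,ℂ)`. -/
def Nset : Set PSL2C := {x | ∃ z : ℂ, x = pr (uMat z)}

/-- `H = π (SL(2,ℝ))`, the image in `PSL(2,ℂ)` of the real matrices. -/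
def Hset : Set PSL2C :=
  {x | ∃ g : Matrix.SpecialLinearGroup (Fin 2) ℝ,
    x = pr (Matrix.SpecialLinearGroup.map (algebraMap ℝ ℂ) g)}

/-- The upper triangular matrix `[[a, z],[0, a⁻¹]]` as an element of `SL(2,ℂ)`,
for a nonzero real `a`. -/
def tri (a : ℝ) (ha : a ≠ 0) (z : ℂ) : SL2C :=
  ⟨!![(a : ℂ), z; 0, (a : ℂ)⁻¹], by
    have h : (a : ℂ) ≠ 0 := by exact_mod_cast ha
    simp [Matrix.det_fin_two_of, mul_inv_cancel₀ h]⟩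

/-- `AN = {π [[a, z],[0, a⁻¹]] : a > 0 real, z ∈ ℂ}`. -/
def ANset : Set PSL2C := {x | ∃ (a : ℝ) (ha : 0 < a) (z : ℂ), x = pr (tri a ha.ne' z)}

/-- `AV = {π [[a, ib],[0, a⁻¹]] : a > 0 real, b ∈ ℝ}`. -/
def AVset : Set PSL2C :=
  {x | ∃ (a : ℝ) (ha : 0 < a) (b : ℝ), x = pr (tri a ha.ne' (b * Complex.I))}

/-- `A = {π diag(a, a⁻¹) : a > 0 real}`. -/
def Aset : Set PSL2C := {x | ∃ (a : ℝ) (ha : 0 < a), x = pr (tri a ha.ne' 0)}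

variable (Γ : Subgroup PSL2C)

/-- The space `Γ\\G` of right cosets `Γg`, with the quotient topology. -/
abbrev XΓ := Quotient (QuotientGroup.rightRel Γ)

/-- The natural projection `G → Γ\\G`. -/
def mkX (g : PSL2C) : XΓ Γ := Quotient.mk'' g

/-- The right translation action of `G` on `Γ\\G`: `(Γg₀)·g = Γ(g₀g)`. -/
def act (x : XΓ Γ) (g : PSL2C) : XΓ Γ :=
  Quotient.map' (fun h => h * g)
    (fun a b hab => by
      rw [QuotientGroup.rightRel_apply] at hab ⊢
      simpa [_root_.mul_inv_rev, mul_assoc] using hab) x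

/-- The orbit `xS = {x·s : s ∈ S}` of a point `x ∈ Γ\\G` under a subset `S ⊆ G`. -/
def orb (x : XΓ Γ) (S : Set PSL2C) : Set (XΓ Γ) := (fun s => act Γ x s) '' S

/-- `Γ` is a lattice in `G`: there is a nonzero finite Borel measure on `Γ\\G`
invariant under the right translation action of `G`. -/
def IsLattice : Prop :=
  letI : MeasurableSpace (XΓ Γ) := borel _
  ∃ μ : MeasureTheory.Measure (XΓ Γ), μ ≠ 0 ∧ MeasureTheory.IsFiniteMeasure μ ∧
    ∀ g : PSL2C, MeasureTheory.Measure.map (fun x => act Γ x g) μ = μ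

/-!
Lift everything to `SL(2,ℂ)`, acting on `X = Γ\G`. The invariant measure of `X` lifts to a Haar
measure of the unimodular group `SL(2,ℂ)`, so the translates of a fixed small open set based at
points with large injectivity radius all have the same measure; finitely many disjoint ones exhaust
the thick part of `X`, which is therefore relatively compact.

Let `x` have closed `SL(2,ℝ)`-orbit, and move `x` inside the orbit so that no noncentral element of
its stabilizer is triangular. Then the geodesic flow `a(t)` brings `x` back to the thick part at
arbitrarily large times: on a ray spent in the thin part, the short stabilizer elements would
commute with one another by the Zassenhaus argument and connectedness of the ray, which leaves
finitely many of them, and each is eventually expanded. As the orbit is closed, the return points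
are `k • x` with `k` in a compact subset of `SL(2,ℝ)`, and `k⁻¹ * a(t)` is a real element of the
stabilizer. For large `t` such an element does not commute with a given nontriangular matrix, so the
stabilizer contains two noncommuting real elements.

Conversely, fix a base point `x₀` with stabilizer `Λ`, a countable group. If `g` conjugates two
noncommuting elements `p`, `q` of `Λ` into `SL(2,ℝ)`, then `g` is determined by `p` and `q` up to
left multiplication by `SL(2,ℝ)` and `diag(i, -i)`, since a matrix commuting with two noncommuting
matrices is central. Hence each of the countably many pairs `(p, q)` accounts for at most two closed
orbits.
-/

open MeasureTheory Set Topology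

section OrbitLift

open scoped Pointwise ENNReal

variable {G X : Type*} [Group G] [MulAction G X]

/-- The points of `X` whose stabilizer meets `W` in at most the identity. For the action of a Lie
group on the quotient by a lattice this is the thick part of the thick–thin decomposition, the
neighbourhood `W` of the identity playing the role of the injectivity radius. -/
def thickPart (X : Type*) [MulAction G X] (W : Set G) : Set X :=
  {x | ∀ g ∈ MulAction.stabilizer G x, g ∈ W → g = 1}

theorem injOn_smul_of_mem_thickPart {x : X} {V W : Set G} (hVW : V⁻¹ * V ⊆ W)
    (hx : x ∈ thickPart X W) : InjOn (· • x : G → X) V := by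
  intro g hg h hh hgh
  refine inv_mul_eq_one.mp (hx _ ?_ (hVW (mul_mem_mul (inv_mem_inv.mpr hg) hh)))
  rw [MulAction.mem_stabilizer_iff, mul_smul, inv_smul_eq_iff]
  exact hgh.symm

section Topology

variable [TopologicalSpace G]

theorem exists_isOpen_inv_mul_subset [IsTopologicalGroup G] {W : Set G} (hW : W ∈ 𝓝 (1 : G)) :
    ∃ V : Set G, IsOpen V ∧ 1 ∈ V ∧ V⁻¹ * V ⊆ W := by
  obtain ⟨U, hU, h1U, hUW⟩ := exists_open_nhds_one_mul_subset hW
  refine ⟨U⁻¹ ∩ U, hU.inv.inter hU, ⟨by simpa, h1U⟩, (mul_subset_mul ?_ ?_).trans hUW⟩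
  · rw [inter_inv, inv_inv]
    exact inter_subset_left
  · exact inter_subset_right

theorem exists_mem_thickPart (x : X) [DiscreteTopology (MulAction.stabilizer G x)] :
    ∃ W ∈ 𝓝 (1 : G), x ∈ thickPart X W := by
  obtain ⟨W, hW, hWx⟩ := (mem_nhds_subtype (MulAction.stabilizer G x : Set G) 1 {1}).mp
    ((isOpen_discrete _).mem_nhds rfl)
  exact ⟨W, hW, fun g hg hgW ↦ congrArg Subtype.val (@hWx ⟨g, hg⟩ hgW)⟩

end Topology

section Measure

variable [MeasurableSpace G]

theorem isMulRightInvariant_of_isPerfect [TopologicalSpace G] [IsTopologicalGroup G]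
    [BorelSpace G] [LocallyCompactSpace G] [SecondCountableTopology G] [Group.IsPerfect G]
    (ν : Measure G) [ν.IsHaarMeasure] : ν.IsMulRightInvariant where
  map_mul_right_eq_self g := by
    have hg : MonoidHom.toHomUnits Measure.modularCharacter g = 1 :=
      Abelianization.commutator_subset_ker (MonoidHom.toHomUnits Measure.modularCharacter)
        (Group.IsPerfect.mem_commutator (g := g))
    have hg' : Measure.modularCharacterFun g = 1 := congrArg Units.val hg
    rw [Measure.map_right_mul_eq_modularCharacterFun_smul ν g, hg', one_smul]

theorem count_inter_fibre_smul [MeasurableMul G] [MeasurableSingletonClass G] (x : X) (k : G)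
    {E : Set G} (hE : MeasurableSet E) :
    Measure.count (E ∩ (· • x) ⁻¹' {k • x}) =
      ∑' l : MulAction.stabilizer G x, E.indicator (1 : G → ℝ≥0∞) (k * l) := by
  have hfib : (· • x) ⁻¹' {k • x} = range fun l : MulAction.stabilizer G x ↦ k * l := by
    ext g
    refine ⟨fun hg ↦ ⟨⟨k⁻¹ * g, ?_⟩, mul_inv_cancel_left k g⟩, ?_⟩
    · rw [MulAction.mem_stabilizer_iff, mul_smul, show g • x = k • x from hg, inv_smul_smul]
    · rintro ⟨l, rfl⟩
      exact (mul_smul k l.1 x).trans (congrArg _ l.2)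
  have hinj : Function.Injective fun l : MulAction.stabilizer G x ↦ k * l :=
    (mul_right_injective k).comp Subtype.val_injective
  have hm : Measurable fun l : MulAction.stabilizer G x ↦ k * l :=
    measurable_subtype_coe.const_mul k
  rw [hfib, ← image_preimage_eq_inter_range, Measure.count_injective_image hinj,
    ← lintegral_indicator_one (hm hE), lintegral_count]
  rfl

theorem count_inter_fibre_of_injOn [MeasurableSingletonClass G] {x : X} {E : Set G}
    (hE : InjOn (· • x : G → X) E) (z : X) :
    Measure.count (E ∩ (· • x) ⁻¹' {z}) = ((· • x) '' E).indicator (1 : X → ℝ≥0∞) z := by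
  have hsub : (E ∩ (· • x) ⁻¹' {z}).Subsingleton :=
    fun g hg h hh ↦ hE hg.1 hh.1 (hg.2.trans hh.2.symm)
  rw [Measure.count_apply hsub.measurableSet]
  by_cases hz : z ∈ (· • x) '' E
  · rw [indicator_of_mem hz]
    obtain ⟨g, hg, hgz⟩ := hz
    have : E ∩ (· • x) ⁻¹' {z} = {g} := hsub.eq_singleton_of_mem ⟨hg, hgz⟩
    simp [this]
  · rw [indicator_of_notMem hz]
    have : E ∩ (· • x) ⁻¹' {z} = ∅ := by
      ext g
      simpa using fun hg hgz ↦ hz ⟨g, hg, hgz⟩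
    simp [this]

variable [MeasurableSpace X]

/-- The lift of a measure on `X` to `G` along the orbit map `g ↦ g • x`: it integrates the counting
measures of the fibres. For a pretransitive action with discrete stabilizers, an invariant measure
lifts to a Haar measure. -/
def orbitLift (μ : Measure X) (x : X) : Measure G :=
  μ.bind fun z ↦ Measure.count.restrict ((· • x) ⁻¹' {z})

variable [TopologicalSpace G] [IsTopologicalGroup G] [PolishSpace G] [BorelSpace G]
  [TopologicalSpace X] [T2Space X] [SecondCountableTopology X] [BorelSpace X]
  [ContinuousSMul G X] [MulAction.IsPretransitive G X]

theorem measurable_count_inter_fibre (x : X) [Countable (MulAction.stabilizer G x)]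
    {E : Set G} (hE : MeasurableSet E) :
    Measurable fun z : X ↦ Measure.count (E ∩ (· • x) ⁻¹' {z}) := by
  have hx : Measurable (· • x : G → X) := (continuous_id.smul continuous_const).measurable
  rw [← hx.measurable_comp_iff_of_surjective (MulAction.surjective_smul G x)]
  simp only [Function.comp_def, count_inter_fibre_smul x _ hE]
  exact .tsum fun l ↦ (measurable_one.indicator hE).comp (measurable_mul_const _)

section Lift

variable (μ : Measure X) (x : X) [DiscreteTopology (MulAction.stabilizer G x)]

theorem orbitLift_apply {E : Set G} (hE : MeasurableSet E) :
    orbitLift μ x E = ∫⁻ z, Measure.count (E ∩ (· • x) ⁻¹' {z}) ∂μ := by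
  have : Countable (MulAction.stabilizer G x) := countable_of_Lindelof_of_discrete
  rw [orbitLift, Measure.bind_apply hE]
  · simp only [Measure.restrict_apply hE]
  · refine (Measure.measurable_of_measurable_coe _ fun A hA ↦ ?_).aemeasurable
    simpa only [Measure.restrict_apply hA] using measurable_count_inter_fibre x hA

instance [SMulInvariantMeasure G X μ] : (orbitLift μ x : Measure G).IsMulLeftInvariant where
  map_mul_left_eq_self g := by
    have : Countable (MulAction.stabilizer G x) := countable_of_Lindelof_of_discrete
    ext E hE
    have hfib (z : X) : (g * ·) ⁻¹' E ∩ (· • x) ⁻¹' {z} =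
        (g * ·) ⁻¹' (E ∩ (· • x) ⁻¹' {g • z}) := by
      ext k
      simp [mul_smul]
    have hcount (z : X) : Measure.count ((g * ·) ⁻¹' E ∩ (· • x) ⁻¹' {z}) =
        Measure.count (E ∩ (· • x) ⁻¹' {g • z}) := by
      rw [hfib, measure_preimage_mul]
    rw [Measure.map_apply (measurable_const_mul g) hE, orbitLift_apply μ x hE,
      orbitLift_apply μ x (measurable_const_mul g hE)]
    simp only [hcount]
    exact (measurePreserving_smul g μ).lintegral_comp (measurable_count_inter_fibre x hE)

theorem orbitLift_ne_zero [NeZero μ] : (orbitLift μ x : Measure G) ≠ 0 := by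
  intro h0
  have hfib (z : X) : 1 ≤ Measure.count (univ ∩ (· • x : G → X) ⁻¹' {z} : Set G) := by
    obtain ⟨g, rfl⟩ := MulAction.exists_smul_eq G x z
    calc 1 = Measure.count {g} := (Measure.count_singleton g).symm
      _ ≤ _ := measure_mono (by simp)
  have hle : μ univ ≤ orbitLift μ x (univ : Set G) := by
    rw [orbitLift_apply μ x .univ, ← lintegral_one]
    exact lintegral_mono hfib
  simp [h0, NeZero.ne μ] at hle

variable [LocallyCompactSpace G] [BaireSpace X]

theorem orbitLift_apply_of_injOn {E : Set G} (hE : IsOpen E) (hinj : InjOn (· • x : G → X) E) :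
    orbitLift μ x E = μ ((· • x) '' E) := by
  have himage : MeasurableSet ((· • x : G → X) '' E) :=
    (isOpenMap_smul_of_sigmaCompact x E hE).measurableSet
  rw [orbitLift_apply μ x hE.measurableSet, ← lintegral_indicator_one himage]
  simp only [count_inter_fibre_of_injOn hinj]

variable [IsFiniteMeasure μ] [SMulInvariantMeasure G X μ]

instance : IsFiniteMeasureOnCompacts (orbitLift μ x : Measure G) where
  lt_top_of_isCompact K hK := by
    obtain ⟨W, hW, hx⟩ := exists_mem_thickPart (G := G) x
    obtain ⟨V, hV, h1V, hVW⟩ := exists_isOpen_inv_mul_subset hW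
    have hVtop : orbitLift μ x V ≠ ∞ := by
      rw [orbitLift_apply_of_injOn μ x hV (injOn_smul_of_mem_thickPart hVW hx)]
      exact measure_ne_top μ _
    exact measure_lt_top_of_isCompact_of_isMulLeftInvariant V hV ⟨1, h1V⟩ hVtop hK

instance [NeZero μ] : (orbitLift μ x : Measure G).IsHaarMeasure where
  toIsOpenPosMeasure :=
    have : NeZero (orbitLift μ x : Measure G) := ⟨orbitLift_ne_zero μ x⟩
    inferInstance

variable [NeZero μ] [Group.IsPerfect G]

theorem measure_image_smul_of_mem_thickPart {V W : Set G} (hV : IsOpen V) (hVW : V⁻¹ * V ⊆ W)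
    {y : X} (hy : y ∈ thickPart X W) :
    μ ((· • y) '' V) = orbitLift μ x V := by
  have := isMulRightInvariant_of_isPerfect (orbitLift μ x : Measure G)
  obtain ⟨g, rfl⟩ := MulAction.exists_smul_eq G x y
  have himage : (· • g • x) '' V = (· • x : G → X) '' ((· * g⁻¹) ⁻¹' V) := by
    rw [show ((· * g⁻¹) ⁻¹' V) = (· * g) '' V by simp, image_image]
    simp only [mul_smul]
  have hinj : InjOn (· • x : G → X) ((· * g⁻¹) ⁻¹' V) := by
    intro a ha b hb hab
    refine mul_right_cancel (injOn_smul_of_mem_thickPart hVW hy ha hb ?_)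
    simpa [mul_smul] using hab
  rw [himage, ← orbitLift_apply_of_injOn μ x (hV.preimage (continuous_mul_const _)) hinj,
    measure_preimage_mul_right]

end Lift

theorem exists_isCompact_thickPart_subset [LocallyCompactSpace G] [BaireSpace X]
    [Group.IsPerfect G] (μ : Measure X) [IsFiniteMeasure μ] [NeZero μ] [SMulInvariantMeasure G X μ]
    (x : X) [DiscreteTopology (MulAction.stabilizer G x)] {W : Set G} (hW : W ∈ 𝓝 1) :
    ∃ C : Set X, IsCompact C ∧ thickPart X W ⊆ C := by
  obtain ⟨K, hK, h1K⟩ := exists_compact_mem_nhds (1 : G)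
  obtain ⟨V, hV, h1V, hVWK⟩ := exists_isOpen_inv_mul_subset (inter_mem hW h1K)
  have hVW : V⁻¹ * V ⊆ W := hVWK.trans inter_subset_left
  -- With a constant size function the Vitali covering lemma yields a maximal disjoint family.
  obtain ⟨u, huW, hdisj, hcover⟩ := Vitali.exists_disjoint_subfamily_covering_enlargement
    (fun y : X ↦ (· • y : G → X) '' V) (thickPart X W) (fun _ ↦ 0) 2 one_lt_two
    (fun _ _ ↦ le_rfl) 0 (fun _ _ ↦ le_rfl) (fun y _ ↦ ⟨_, mem_image_of_mem _ h1V⟩)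
  have hu : u.Finite := by
    have hfin := Measure.finite_const_le_meas_of_disjoint_iUnion μ
      (hV.measure_pos (orbitLift μ x) ⟨1, h1V⟩) (As := fun y : u ↦ (· • y.1 : G → X) '' V)
      (fun y ↦ (isOpenMap_smul_of_sigmaCompact y.1 V hV).measurableSet)
      (fun y z hyz ↦ hdisj y.2 z.2 (Subtype.coe_injective.ne hyz)) (measure_ne_top μ _)
    refine finite_coe_iff.mp (finite_univ_iff.mp (hfin.subset fun y _ ↦ ?_))
    exact (measure_image_smul_of_mem_thickPart μ x hV hVW (huW y.2)).ge
  refine ⟨⋃ y ∈ u, (· • y) '' K, hu.isCompact_biUnion fun y _ ↦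
    hK.image (continuous_id.smul continuous_const), fun z hz ↦ ?_⟩
  obtain ⟨y, hy, ⟨_, ⟨g, hg, rfl⟩, h, hh, hgh⟩, -⟩ := hcover z hz
  refine mem_biUnion hy ⟨g⁻¹ * h, (hVWK (mul_mem_mul (inv_mem_inv.mpr hg) hh)).2, ?_⟩
  rw [← inv_smul_smul g z]
  exact (mul_smul _ _ _).trans (congrArg _ hgh)

end Measure

end OrbitLift

theorem exists_eq_scalar_add_smul_of_commute {K : Type*} [Field K] {A B : Matrix (Fin 2) (Fin 2) K}
    (hA : A ∉ range (scalar (Fin 2))) (h : Commute A B) :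
    ∃ x y : K, B = scalar (Fin 2) x + y • A := by
  have h00 : A 0 1 * B 1 0 = B 0 1 * A 1 0 := by
    have := congrFun₂ h.eq 0 0
    simp only [mul_apply, Fin.sum_univ_two] at this
    linear_combination this
  have h01 : (A 0 0 - A 1 1) * B 0 1 = (B 0 0 - B 1 1) * A 0 1 := by
    have := congrFun₂ h.eq 0 1
    simp only [mul_apply, Fin.sum_univ_two] at this
    linear_combination this
  have h10 : (A 0 0 - A 1 1) * B 1 0 = (B 0 0 - B 1 1) * A 1 0 := by
    have := congrFun₂ h.eq 1 0
    simp only [mul_apply, Fin.sum_univ_two] at this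
    linear_combination -this
  obtain ⟨y, hy01, hy10, hyd⟩ : ∃ y : K, B 0 1 = y * A 0 1 ∧ B 1 0 = y * A 1 0 ∧
      B 0 0 - B 1 1 = y * (A 0 0 - A 1 1) := by
    by_cases hb : A 0 1 = 0
    · by_cases hc : A 1 0 = 0
      · have hd : A 0 0 - A 1 1 ≠ 0 := by
          refine fun hd ↦ hA ⟨A 0 0, ?_⟩
          ext i j
          fin_cases i <;> fin_cases j <;> simp [hb, hc, sub_eq_zero.mp hd]
        refine ⟨(B 0 0 - B 1 1) / (A 0 0 - A 1 1), ?_, ?_, ?_⟩ <;> field_simp <;> grind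
      · refine ⟨B 1 0 / A 1 0, ?_, ?_, ?_⟩ <;> field_simp <;> grind
    · refine ⟨B 0 1 / A 0 1, ?_, ?_, ?_⟩ <;> field_simp <;> grind
  refine ⟨B 1 1 - y * A 1 1, y, ?_⟩
  ext i j
  fin_cases i <;> fin_cases j <;> simp [hy01, hy10]
  linear_combination hyd

theorem commute_trans_of_notMem_range_scalar {K : Type*} [Field K]
    {A B C : Matrix (Fin 2) (Fin 2) K} (hA : A ∉ range (scalar (Fin 2))) (hB : Commute A B)
    (hC : Commute A C) : Commute B C := by
  obtain ⟨x, y, rfl⟩ := exists_eq_scalar_add_smul_of_commute hA hB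
  exact .add_left (scalar_commute _ (Commute.all _) _) (hC.smul_left y)

theorem mem_center_iff_val_mem_range_scalar {p : SL2C} :
    p ∈ Subgroup.center SL2C ↔ p.1 ∈ range (scalar (Fin 2)) := by
  rw [Matrix.SpecialLinearGroup.mem_center_iff]
  refine ⟨fun ⟨r, _, hr⟩ ↦ ⟨r, hr⟩, fun ⟨r, hr⟩ ↦ ⟨r, ?_, hr⟩⟩
  simpa [← hr] using p.2

theorem mem_center_iff_eq_one_or_neg_one {p : SL2C} :
    p ∈ Subgroup.center SL2C ↔ p = 1 ∨ p = -1 := by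
  refine ⟨fun hp ↦ ?_, by rintro (rfl | rfl) <;> simp [Subgroup.mem_center_iff]⟩
  obtain ⟨r, hr, hrp⟩ := Matrix.SpecialLinearGroup.mem_center_iff.mp hp
  refine (by simpa using hr : r = 1 ∨ r = -1).imp ?_ ?_ <;> rintro rfl <;>
    exact Subtype.ext (by rw [← hrp]; simp [-Matrix.scalar_apply])

theorem SL2C.commute_val_iff {p q : SL2C} : Commute p.1 q.1 ↔ Commute p q :=
  Subtype.val_inj (a := p * q) (b := q * p)

theorem commute_trans_of_notMem_center {p q r : SL2C} (hp : p ∉ Subgroup.center SL2C)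
    (hq : Commute p q) (hr : Commute p r) : Commute q r :=
  SL2C.commute_val_iff.mp <| commute_trans_of_notMem_range_scalar
    (mt mem_center_iff_val_mem_range_scalar.mpr hp) (SL2C.commute_val_iff.mpr hq)
    (SL2C.commute_val_iff.mpr hr)

instance : IsTopologicalGroup SL2C := Matrix.SpecialLinearGroup.topologicalGroup

theorem SL2C.isClosedEmbedding_val :
    IsClosedEmbedding (Subtype.val : SL2C → Matrix (Fin 2) (Fin 2) ℂ) :=
  Matrix.SpecialLinearGroup.isClosedEmbedding_val

instance : PolishSpace (Matrix (Fin 2) (Fin 2) ℂ) :=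
  inferInstanceAs (PolishSpace (Fin 2 → Fin 2 → ℂ))

instance : LocallyCompactSpace (Matrix (Fin 2) (Fin 2) ℂ) :=
  inferInstanceAs (LocallyCompactSpace (Fin 2 → Fin 2 → ℂ))

instance : PolishSpace SL2C := SL2C.isClosedEmbedding_val.polishSpace

instance : LocallyCompactSpace SL2C := SL2C.isClosedEmbedding_val.locallyCompactSpace

instance : Group.IsPerfect SL2C := ⟨SL2.commutator_eq_top two_ne_zero (by norm_num)⟩

theorem finite_inter_of_isCompact {G : Type*} [Group G] [TopologicalSpace G] [IsTopologicalGroup G]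
    [T2Space G] (Λ : Subgroup G) [DiscreteTopology Λ] {K : Set G} (hK : IsCompact K) :
    (Λ ∩ K : Set G).Finite := by
  have hfin := (Λ.tendsto_coe_cofinite_of_discrete ⟨inferInstance⟩) hK.compl_mem_cocompact
  rw [← Subtype.image_preimage_coe]
  exact (by simpa using hfin : (Subtype.val ⁻¹' K : Set Λ).Finite).image _

section Zassenhaus

open scoped Matrix.Norms.Operator commutatorElement

theorem norm_units_inv_le {R : Type*} [NormedRing R] [NormOneClass R] (u : Rˣ) {ε : ℝ}
    (hu : ‖u.val - 1‖ ≤ ε) (hε : ε < 1) : ‖u⁻¹.val‖ ≤ (1 - ε)⁻¹ := by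
  have hinv : u⁻¹.val = 1 - u⁻¹.val * (u.val - 1) := by simp [mul_sub]
  have : ‖u⁻¹.val‖ ≤ 1 + ‖u⁻¹.val‖ * ε := calc
    ‖u⁻¹.val‖ = ‖1 - u⁻¹.val * (u.val - 1)‖ := congrArg _ hinv
    _ ≤ ‖(1 : R)‖ + ‖u⁻¹.val * (u.val - 1)‖ := norm_sub_le _ _
    _ ≤ 1 + ‖u⁻¹.val‖ * ε := by
      rw [norm_one]; gcongr; exact (norm_mul_le _ _).trans (by gcongr)
  rw [← one_div (1 - ε), le_div_iff₀ (by linarith)]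
  linarith

theorem norm_commutator_units_sub_one_le_min {R : Type*} [NormedRing R] [NormOneClass R] {u v : Rˣ}
    (hu : ‖u.val - 1‖ ≤ 1 / 4) (hv : ‖v.val - 1‖ ≤ 1 / 4) :
    ‖(u * v * u⁻¹ * v⁻¹).val - 1‖ ≤ 8 / 9 * min ‖u.val - 1‖ ‖v.val - 1‖ := by
  have hu' := norm_units_inv_le u hu (by norm_num)
  have hv' := norm_units_inv_le v hv (by norm_num)
  rw [mul_min_of_nonneg _ _ (by norm_num), le_min_iff]
  constructor
  · calc _ ≤ _ := norm_commutator_units_sub_one_le u v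
      _ ≤ 2 * (1 - 1 / 4)⁻¹ * (1 - 1 / 4)⁻¹ * ‖u.val - 1‖ * (1 / 4) := by gcongr
      _ = 8 / 9 * ‖u.val - 1‖ := by ring
  · calc _ ≤ _ := norm_commutator_units_sub_one_le u v
      _ ≤ 2 * (1 - 1 / 4)⁻¹ * (1 - 1 / 4)⁻¹ * (1 / 4) * ‖v.val - 1‖ := by gcongr
      _ = 8 / 9 * ‖v.val - 1‖ := by ring

/-- `W` is a Zassenhaus neighbourhood, in the strong form that the elements in `W` of any discrete
subgroup commute; nilpotent subgroups of `SL(2,ℂ)` generated by small elements are abelian. -/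
def IsZassenhaus {G : Type*} [Group G] [TopologicalSpace G] (W : Set G) : Prop :=
  ∀ Λ : Subgroup G, DiscreteTopology Λ → ∀ p ∈ Λ, ∀ q ∈ Λ, p ∈ W → q ∈ W → Commute p q

theorem norm_commutator_sub_one_lt_min {p q : SL2C} (hp : ‖p.1 - 1‖ < 1 / 4)
    (hq : ‖q.1 - 1‖ < 1 / 4) (hpq : ¬Commute p q) :
    ‖(⁅p, q⁆ : SL2C).1 - 1‖ < min ‖p.1 - 1‖ ‖q.1 - 1‖ := by
  have hpos (r : SL2C) (hr : r ≠ 1) : 0 < ‖r.1 - 1‖ :=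
    norm_pos_iff.mpr (sub_ne_zero.mpr fun h ↦ hr (Subtype.ext h))
  have hmin : 0 < min ‖p.1 - 1‖ ‖q.1 - 1‖ :=
    lt_min (hpos p fun h ↦ hpq (h ▸ .one_left q)) (hpos q fun h ↦ hpq (h ▸ .one_right p))
  calc _ ≤ 8 / 9 * min ‖p.1 - 1‖ ‖q.1 - 1‖ :=
        norm_commutator_units_sub_one_le_min (u := Matrix.SpecialLinearGroup.toGL p)
          (v := Matrix.SpecialLinearGroup.toGL q) hp.le hq.le
    _ < _ := by linarith

theorem eq_one_of_mem_center_of_norm_sub_one_lt {p : SL2C} (hp : ‖p.1 - 1‖ < 1 / 4)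
    (hc : p ∈ Subgroup.center SL2C) : p = 1 := by
  refine (mem_center_iff_eq_one_or_neg_one.mp hc).resolve_right ?_
  rintro rfl
  have : (-1 : SL2C).1 - 1 = (-2 : ℂ) • 1 := by
    rw [Matrix.SpecialLinearGroup.coe_neg, Matrix.SpecialLinearGroup.coe_one]; module
  rw [this, norm_smul, norm_one] at hp
  norm_num at hp

theorem isCompact_norm_sub_one_le (r : ℝ) : IsCompact {p : SL2C | ‖p.1 - 1‖ ≤ r} := by
  have := FiniteDimensional.proper ℂ (Matrix (Fin 2) (Fin 2) ℂ)
  have hball := SL2C.isClosedEmbedding_val.isCompact_preimage (isCompact_closedBall 1 r)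
  simpa only [preimage, mem_closedBall_iff_norm] using! hball

theorem isZassenhaus_norm_sub_one_lt : IsZassenhaus {p : SL2C | ‖p.1 - 1‖ < 1 / 4} := by
  -- A shortest non-commuting pair has a shorter commutator, which must then commute with both.
  intro Λ _
  set F : Set SL2C := Λ ∩ {p | ‖p.1 - 1‖ < 1 / 4}
  have hF : F.Finite := (finite_inter_of_isCompact Λ (isCompact_norm_sub_one_le (1 / 4))).subset
    (inter_subset_inter_right _ fun p (hp : ‖p.1 - 1‖ < 1 / 4) ↦ hp.le)
  by_contra! ⟨p, hpΛ, q, hqΛ, hp, hq, hpq⟩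
  obtain ⟨⟨a, b⟩, ⟨⟨ha, hb⟩, hab⟩, hmin⟩ := Set.exists_min_image
    ((F ×ˢ F) ∩ {x | ¬Commute x.1 x.2}) (fun x ↦ ‖x.1.1 - 1‖ + ‖x.2.1 - 1‖)
    ((hF.prod hF).inter_of_left _) ⟨(p, q), ⟨⟨hpΛ, hp⟩, ⟨hqΛ, hq⟩⟩, hpq⟩
  obtain ⟨hsa, hsb⟩ := lt_min_iff.mp (norm_commutator_sub_one_lt_min ha.2 hb.2 hab)
  have hs : ⁅a, b⁆ ∈ F :=
    ⟨Λ.mul_mem (Λ.mul_mem (Λ.mul_mem ha.1 hb.1) (Λ.inv_mem ha.1)) (Λ.inv_mem hb.1), hsa.trans ha.2⟩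
  have hca : Commute ⁅a, b⁆ a := by
    by_contra h
    linarith [hmin (⁅a, b⁆, a) ⟨⟨hs, ha⟩, h⟩]
  have hcb : Commute ⁅a, b⁆ b := by
    by_contra h
    linarith [hmin (⁅a, b⁆, b) ⟨⟨hs, hb⟩, h⟩]
  by_cases hc : ⁅a, b⁆ ∈ Subgroup.center SL2C
  · exact hab (commutatorElement_eq_one_iff_commute.mp
      (eq_one_of_mem_center_of_norm_sub_one_lt hs.2 hc))
  · exact hab (commute_trans_of_notMem_center hc hca hcb)

theorem exists_isOpen_isZassenhaus : ∃ W : Set SL2C, IsOpen W ∧ 1 ∈ W ∧ IsZassenhaus W ∧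
    (∀ p ∈ W, p ∈ Subgroup.center SL2C → p = 1) ∧ ∃ K, IsCompact K ∧ W ⊆ K :=
  ⟨{p | ‖p.1 - 1‖ < 1 / 4}, isOpen_lt (by fun_prop) continuous_const, by simp,
    isZassenhaus_norm_sub_one_lt, fun _ ↦ eq_one_of_mem_center_of_norm_sub_one_lt,
    _, isCompact_norm_sub_one_le (1 / 4), fun p (hp : ‖p.1 - 1‖ < 1 / 4) ↦ hp.le⟩

end Zassenhaus

section GeodesicFlow

theorem isCompact_setOf_norm_apply_le (R : ℝ) :
    IsCompact {p : SL2C | ∀ i j, ‖p.1 i j‖ ≤ R} := by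
  have hpi : IsCompact {A : Fin 2 → Fin 2 → ℂ | ∀ i j, ‖A i j‖ ≤ R} := by
    convert isCompact_univ_pi fun _ : Fin 2 ↦ isCompact_univ_pi fun _ : Fin 2 ↦
      isCompact_closedBall (0 : ℂ) R
    ext A
    simp
  exact SL2C.isClosedEmbedding_val.isCompact_preimage hpi

theorem exists_forall_norm_apply_le {K : Set SL2C} (hK : IsCompact K) :
    ∃ R, ∀ p ∈ K, ∀ i j, ‖p.1 i j‖ ≤ R := by
  choose R hR using fun i j ↦ hK.exists_bound_of_continuousOn (f := fun p : SL2C ↦ p.1 i j)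
    (SL2C.isClosedEmbedding_val.continuous.matrix_elem i j).continuousOn
  refine ⟨Finset.univ.sup' Finset.univ_nonempty fun ij : Fin 2 × Fin 2 ↦ R ij.1 ij.2,
    fun p hp i j ↦ (hR i j p hp).trans ?_⟩
  exact Finset.le_sup' (fun ij : Fin 2 × Fin 2 ↦ R ij.1 ij.2) (Finset.mem_univ (i, j))

/-- `diag(e^t, e^{-t})`, whose action is the geodesic flow. Conjugation by it expands the upper
right entry of a matrix and contracts the lower left one. -/
def geoFlow (t : ℝ) : SL2C := tri (Real.exp t) (Real.exp_ne_zero t) 0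

theorem geoFlow_mul_mul_inv_val (t : ℝ) (p : SL2C) : (geoFlow t * p * (geoFlow t)⁻¹).1 =
    !![p.1 0 0, Complex.exp (2 * t) * p.1 0 1; Complex.exp (-(2 * t)) * p.1 1 0, p.1 1 1] := by
  have hexp : Complex.exp (2 * t) = Complex.exp t * Complex.exp t := by
    rw [← Complex.exp_add, two_mul]
  rw [Complex.exp_neg, hexp, Matrix.SpecialLinearGroup.coe_mul, Matrix.SpecialLinearGroup.coe_mul,
    Matrix.SpecialLinearGroup.SL2_inv_expl]
  ext i j
  rw [Matrix.mul_apply]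
  fin_cases i <;> fin_cases j <;> simp [geoFlow, tri, vecMul, dotProduct] <;> field_simp

theorem norm_apply_le_of_geoFlow_conj_mem {K : Set SL2C} {R t : ℝ}
    (hR : ∀ p ∈ K, ∀ i j, ‖p.1 i j‖ ≤ R) {p : SL2C} (hp : geoFlow t * p * (geoFlow t)⁻¹ ∈ K) :
    ‖p.1 0 0‖ ≤ R ∧ Real.exp (2 * t) * ‖p.1 0 1‖ ≤ R ∧ ‖p.1 1 1‖ ≤ R := by
  have h := hR _ hp
  rw [geoFlow_mul_mul_inv_val] at h
  refine ⟨by simpa using h 0 0, ?_, by simpa using h 1 1⟩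
  simpa [Complex.norm_exp] using h 0 1

variable (Λ : Subgroup SL2C) [DiscreteTopology Λ]

theorem finite_setOf_commute_geoFlow_conj_mem {K : Set SL2C} (hK : IsCompact K) {p : SL2C}
    (hp : p.1 0 1 ≠ 0) :
    {q ∈ Λ | Commute p q ∧ ∃ t ≥ 0, geoFlow t * q * (geoFlow t)⁻¹ ∈ K}.Finite := by
  obtain ⟨R, hR⟩ := exists_forall_norm_apply_le hK
  refine (finite_inter_of_isCompact Λ
    (isCompact_setOf_norm_apply_le (max R (R * (‖p.1 1 0‖ / ‖p.1 0 1‖))))).subset ?_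
  rintro q ⟨hqΛ, hpq, t, ht, hq⟩
  obtain ⟨h00, h01, h11⟩ := norm_apply_le_of_geoFlow_conj_mem hR hq
  replace h01 : ‖q.1 0 1‖ ≤ R :=
    (le_mul_of_one_le_left (norm_nonneg _) (Real.one_le_exp (by positivity))).trans h01
  have hscalar : p.1 ∉ range (scalar (Fin 2)) := fun ⟨z, hz⟩ ↦ hp (by simp [← hz])
  obtain ⟨x, y, hxy⟩ := exists_eq_scalar_add_smul_of_commute hscalar (SL2C.commute_val_iff.mpr hpq)
  have h10 : ‖q.1 1 0‖ ≤ R * (‖p.1 1 0‖ / ‖p.1 0 1‖) := by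
    have hq01 : q.1 0 1 = y * p.1 0 1 := by simp [hxy]
    have hq10 : q.1 1 0 = y * p.1 1 0 := by simp [hxy]
    have hq : q.1 1 0 = q.1 0 1 * (p.1 1 0 / p.1 0 1) := by
      rw [hq10, hq01]
      field_simp
    rw [hq, norm_mul, norm_div]
    gcongr
  refine ⟨hqΛ, fun i j ↦ ?_⟩
  fin_cases i <;> fin_cases j
  exacts [h00.trans (le_max_left _ _), h01.trans (le_max_left _ _), h10.trans (le_max_right _ _),
    h11.trans (le_max_left _ _)]

theorem eventually_geoFlow_conj_notMem {K : Set SL2C} (hK : IsCompact K) {p : SL2C}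
    (hp : p.1 0 1 ≠ 0) : ∀ᶠ t in atTop, geoFlow t * p * (geoFlow t)⁻¹ ∉ K := by
  obtain ⟨R, hR⟩ := exists_forall_norm_apply_le hK
  have htop : Tendsto (fun t ↦ Real.exp (2 * t) * ‖p.1 0 1‖) atTop atTop :=
    (Real.tendsto_exp_atTop.comp (tendsto_id.const_mul_atTop two_pos)).atTop_mul_const
      (norm_pos_iff.mpr hp)
  filter_upwards [htop.eventually_gt_atTop R] with t ht hmem
  exact ht.not_ge (norm_apply_le_of_geoFlow_conj_mem hR hmem).2.1

theorem exists_mem_of_isPreconnected {α ι : Type*} [TopologicalSpace α] {S : Set α}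
    (hS : IsPreconnected S) {U : ι → Set α} (hU : ∀ i, IsOpen (U i)) (hSU : S ⊆ ⋃ i, U i)
    {P : ι → Prop} (hP : ∀ i j, P i → (U i ∩ U j).Nonempty → P j) {i : ι} (hi : P i)
    (hSi : (S ∩ U i).Nonempty) {t : α} (ht : t ∈ S) : ∃ j, P j ∧ t ∈ U j := by
  have hsub : S ⊆ ⋃ j ∈ {j | P j}, U j := by
    refine IsPreconnected.subset_left_of_subset_union (v := ⋃ j ∈ {j | ¬P j}, U j)
      (isOpen_biUnion fun j _ ↦ hU j) (isOpen_biUnion fun j _ ↦ hU j) ?_ ?_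
      (hSi.mono (inter_subset_inter_right _ (subset_biUnion_of_mem hi))) hS
    · simp only [disjoint_iUnion_left, disjoint_iUnion_right]
      intro j hj k hk
      rw [disjoint_iff_inter_eq_empty, ← not_nonempty_iff_eq_empty]
      exact fun h ↦ hj (hP k j hk h)
    · rw [← biUnion_union]
      refine hSU.trans (iUnion_subset fun j ↦ subset_biUnion_of_mem (em (P j)))
  simpa using hsub ht

theorem IsZassenhaus.commute_of_conj_mem {G : Type*} [Group G] [TopologicalSpace G]
    [IsTopologicalGroup G] {W : Set G} (hW : IsZassenhaus W) (Λ : Subgroup G) [DiscreteTopology Λ]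
    (g : G) {p q : G} (hp : p ∈ Λ) (hq : q ∈ Λ) (hpW : g * p * g⁻¹ ∈ W) (hqW : g * q * g⁻¹ ∈ W) :
    Commute p q := by
  let conjInv : G →* G := (MulAut.conj g⁻¹).toMonoidHom
  have hconj (p : G) : conjInv (g * p * g⁻¹) = p := by simp [conjInv, mul_assoc]
  have hcont : Continuous conjInv := by
    change Continuous fun p ↦ g⁻¹ * p * g⁻¹⁻¹
    fun_prop
  have hdisc : DiscreteTopology (Λ.comap conjInv) :=
    .of_continuous_injective (f := MapsTo.restrict conjInv (Λ.comap conjInv) Λ fun _ ↦ id)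
      (hcont.restrict _) ((MapsTo.restrict_inj _).mpr (MulAut.conj g⁻¹).injective.injOn)
  exact (Commute.conj_iff g).mp (hW _ hdisc _ (by rwa [Subgroup.mem_comap, hconj]) _
    (by rwa [Subgroup.mem_comap, hconj]) hpW hqW)

theorem exists_commute_conj_mem_of_isPreconnected {α : Type*} [TopologicalSpace α] {S : Set α}
    (hS : IsPreconnected S) (hne : S.Nonempty) {g : α → SL2C} (hg : Continuous g) {W : Set SL2C}
    (hWo : IsOpen W) (hWz : IsZassenhaus W)
    (h : ∀ t ∈ S, ∃ p ∈ Λ, p ∉ Subgroup.center SL2C ∧ g t * p * (g t)⁻¹ ∈ W) :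
    ∃ p ∈ Λ, p ∉ Subgroup.center SL2C ∧
      ∀ t ∈ S, ∃ q ∈ Λ, q ∉ Subgroup.center SL2C ∧ Commute p q ∧ g t * q * (g t)⁻¹ ∈ W := by
  obtain ⟨t₀, ht₀⟩ := hne
  obtain ⟨p, hpΛ, hpc, hpW⟩ := h t₀ ht₀
  refine ⟨p, hpΛ, hpc, fun t ht ↦ ?_⟩
  obtain ⟨q, hpq, hqW⟩ := exists_mem_of_isPreconnected hS
    (U := fun q : {q // q ∈ Λ ∧ q ∉ Subgroup.center SL2C} ↦ {t | g t * q * (g t)⁻¹ ∈ W})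
    (fun q ↦ hWo.preimage (by fun_prop))
    (fun s hs ↦ have ⟨q, hqΛ, hqc, hqW⟩ := h s hs; mem_iUnion.mpr ⟨⟨q, hqΛ, hqc⟩, hqW⟩)
    (P := fun q ↦ Commute p q)
    (fun q r hpq ⟨s, hqs, hrs⟩ ↦ commute_trans_of_notMem_center q.2.2 hpq.symm
      (hWz.commute_of_conj_mem Λ (g s) q.2.1 r.2.1 hqs hrs))
    (i := ⟨p, hpΛ, hpc⟩) (.refl p) ⟨t₀, ht₀, hpW⟩ ht
  exact ⟨q, q.2.1, q.2.2, hpq, hqW⟩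

theorem continuous_geoFlow : Continuous geoFlow := by
  have hexp : Continuous fun t : ℝ ↦ (Real.exp t : ℂ) := by fun_prop
  have hinv : Continuous fun t : ℝ ↦ (Real.exp t : ℂ)⁻¹ := hexp.inv₀ (by simp)
  refine Continuous.subtype_mk (continuous_matrix fun i j ↦ ?_) _
  fin_cases i <;> fin_cases j
  exacts [hexp, continuous_const, continuous_const, hinv]

theorem frequently_geoFlow_conj_notMem {W : Set SL2C} (hWo : IsOpen W) (hWz : IsZassenhaus W)
    (hWc : ∀ p ∈ W, p ∈ Subgroup.center SL2C → p = 1) {K : Set SL2C} (hK : IsCompact K)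
    (hWK : W ⊆ K) (hΛ : ∀ p ∈ Λ, p.1 0 1 = 0 → p ∈ Subgroup.center SL2C) :
    ∃ᶠ t in atTop, ∀ p ∈ Λ, geoFlow t * p * (geoFlow t)⁻¹ ∈ W → p = 1 := by
  intro hev
  obtain ⟨T, hT⟩ := eventually_atTop.mp (hev.and (eventually_ge_atTop 0))
  obtain ⟨p, hpΛ, hpc, hp⟩ := exists_commute_conj_mem_of_isPreconnected Λ
    (isPreconnected_Ici (a := T)) nonempty_Ici continuous_geoFlow hWo hWz fun t ht ↦ by
      obtain ⟨q, hqΛ, hqW, hq1⟩ : ∃ q ∈ Λ, geoFlow t * q * (geoFlow t)⁻¹ ∈ W ∧ q ≠ 1 := by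
        simpa using (hT t ht).1
      refine ⟨q, hqΛ, fun hqc ↦ hq1 (hWc q ?_ hqc), hqW⟩
      rwa [Subgroup.mem_center_iff.mp hqc, mul_inv_cancel_right] at hqW
  have hfin := finite_setOf_commute_geoFlow_conj_mem Λ hK (mt (hΛ p hpΛ) hpc)
  have hout : ∀ᶠ t in atTop,
      ∀ q ∈ {q ∈ Λ | Commute p q ∧ ∃ t ≥ 0, geoFlow t * q * (geoFlow t)⁻¹ ∈ K},
        q ∉ Subgroup.center SL2C → geoFlow t * q * (geoFlow t)⁻¹ ∉ K := by
    refine (eventually_all_finite hfin).mpr fun q hq ↦ eventually_imp_distrib_left.mpr fun hqc ↦ ?_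
    exact eventually_geoFlow_conj_notMem hK (mt (hΛ q hq.1) hqc)
  obtain ⟨t, ht, hTt⟩ := (hout.and (eventually_ge_atTop T)).exists
  obtain ⟨q, hqΛ, hqc, hpq, hqW⟩ := hp t hTt
  exact ht q ⟨hqΛ, hpq, t, (hT t hTt).2, hWK hqW⟩ hqc (hWK hqW)

end GeodesicFlow

section RealSubgroup

/-- `SL(2,ℝ)` as a subgroup of `SL(2,ℂ)`. -/
def realSL2 : Subgroup SL2C := (Matrix.SpecialLinearGroup.map (algebraMap ℝ ℂ)).range

/-- Complex conjugation on `SL(2,ℂ)`; its fixed points are `SL(2,ℝ)`. -/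
def conjSL2 : SL2C →* SL2C := Matrix.SpecialLinearGroup.map (starRingEnd ℂ)

theorem conjSL2_apply (p : SL2C) (i j : Fin 2) :
    (conjSL2 p).1 i j = starRingEnd ℂ (p.1 i j) := rfl

theorem mem_realSL2_iff {p : SL2C} : p ∈ realSL2 ↔ conjSL2 p = p := by
  refine ⟨?_, fun hp ↦ ?_⟩
  · rintro ⟨q, rfl⟩
    ext i j
    exact Complex.conj_ofReal _
  · have hre (i j : Fin 2) : ((p.1 i j).re : ℂ) = p.1 i j :=
      Complex.conj_eq_iff_re.mp (by rw [← conjSL2_apply, hp])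
    have hmap : (algebraMap ℝ ℂ).mapMatrix (of fun i j ↦ (p.1 i j).re) = p.1 := by
      ext i j
      exact hre i j
    refine ⟨⟨of fun i j ↦ (p.1 i j).re, ?_⟩, Subtype.ext hmap⟩
    refine (algebraMap ℝ ℂ).injective ?_
    rw [RingHom.map_det, hmap, p.2, map_one]

theorem isClosed_realSL2 : IsClosed (realSL2 : Set SL2C) := by
  have hset : (realSL2 : Set SL2C) = {p | ∀ i j, starRingEnd ℂ (p.1 i j) = p.1 i j} := by
    ext p
    rw [SetLike.mem_coe, mem_realSL2_iff, Matrix.SpecialLinearGroup.ext_iff]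
    rfl
  rw [hset]
  simp only [ofPred_forall]
  refine isClosed_iInter fun i ↦ isClosed_iInter fun j ↦ ?_
  have hij := SL2C.isClosedEmbedding_val.continuous.matrix_elem i j
  exact isClosed_eq (Complex.continuous_conj.comp hij) hij

instance : PolishSpace realSL2 := isClosed_realSL2.isClosedEmbedding_subtypeVal.polishSpace

instance : LocallyCompactSpace realSL2 :=
  isClosed_realSL2.isClosedEmbedding_subtypeVal.locallyCompactSpace

theorem geoFlow_mem_realSL2 (t : ℝ) : geoFlow t ∈ realSL2 := by
  rw [mem_realSL2_iff]
  ext i j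
  rw [conjSL2_apply]
  fin_cases i <;> fin_cases j <;> simp [geoFlow, tri, ← Complex.exp_conj]

theorem uMat_ofReal_mem_realSL2 (s : ℝ) : uMat s ∈ realSL2 := by
  rw [mem_realSL2_iff]
  ext i j
  rw [conjSL2_apply]
  fin_cases i <;> fin_cases j <;> simp [uMat]

theorem uMat_conj_apply_zero_one (s : ℂ) (p : SL2C) :
    (uMat s * p * (uMat s)⁻¹).1 0 1 = p.1 0 1 + (p.1 1 1 - p.1 0 0) * s - p.1 1 0 * s ^ 2 := by
  rw [Matrix.SpecialLinearGroup.coe_mul, Matrix.SpecialLinearGroup.coe_mul,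
    Matrix.SpecialLinearGroup.SL2_inv_expl, Matrix.mul_apply]
  simp [uMat, vecMul, dotProduct]
  ring

open Polynomial in
theorem finite_setOf_uMat_conj_apply_eq_zero {p : SL2C} (hp : p ∉ Subgroup.center SL2C) :
    {s : ℝ | (uMat s * p * (uMat s)⁻¹).1 0 1 = 0}.Finite := by
  set P : ℂ[X] := C (p.1 0 1) + C (p.1 1 1 - p.1 0 0) * X - C (p.1 1 0) * X ^ 2 with hPdef
  have hP : P ≠ 0 := by
    refine fun hP ↦ hp (mem_center_iff_val_mem_range_scalar.mpr ⟨p.1 0 0, ?_⟩)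
    have hcoeff (n : ℕ) : P.coeff n = 0 := by rw [hP, coeff_zero]
    have h0 : p.1 0 1 = 0 := by simpa [hPdef, coeff_X, coeff_C] using hcoeff 0
    have h1 : p.1 1 1 - p.1 0 0 = 0 := by simpa [hPdef, coeff_X, coeff_C] using hcoeff 1
    have h2 : p.1 1 0 = 0 := by simpa [hPdef, coeff_X, coeff_C] using hcoeff 2
    ext i j
    fin_cases i <;> fin_cases j <;> simp [h0, h2, sub_eq_zero.mp h1]
  refine ((finite_setOfPred_isRoot hP).preimage Complex.ofReal_injective.injOn).subset
    fun s hs ↦ ?_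
  simpa [uMat_conj_apply_zero_one, hPdef] using hs

theorem exists_mem_realSL2_forall_mem_center (Λ : Subgroup SL2C) [Countable Λ] :
    ∃ h ∈ realSL2, ∀ p ∈ Λ, (h * p * h⁻¹).1 0 1 = 0 → p ∈ Subgroup.center SL2C := by
  have hcount : (⋃ p ∈ {p | p ∈ Λ ∧ p ∉ Subgroup.center SL2C},
      {s : ℝ | (uMat s * p * (uMat s)⁻¹).1 0 1 = 0}).Countable :=
    .biUnion ((to_countable (Λ : Set SL2C)).mono fun p hp ↦ hp.1) fun p hp ↦
      (finite_setOf_uMat_conj_apply_eq_zero hp.2).countable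
  obtain ⟨s, hs⟩ := (hcount.dense_compl ℝ).nonempty
  refine ⟨uMat s, uMat_ofReal_mem_realSL2 s, fun p hp hps ↦ by_contra fun hpc ↦ hs ?_⟩
  exact mem_biUnion (show p ∈ Λ ∧ p ∉ _ from ⟨hp, hpc⟩) hps

theorem mul_geoFlow_val (t : ℝ) (k : SL2C) : (k * geoFlow t).1 =
    !![Complex.exp t * k.1 0 0, (Complex.exp t)⁻¹ * k.1 0 1;
      Complex.exp t * k.1 1 0, (Complex.exp t)⁻¹ * k.1 1 1] := by
  rw [Matrix.SpecialLinearGroup.coe_mul]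
  ext i j
  rw [Matrix.mul_apply]
  fin_cases i <;> fin_cases j <;> simp [geoFlow, tri, mul_comm]

theorem exp_two_mul_eq_of_commute {t : ℝ} {k p : SL2C} (hp : p.1 0 1 ≠ 0)
    (h : Commute p (k * geoFlow t)) : Complex.exp (2 * t) = k.1 1 1 * k.1 1 1 +
      (p.1 0 0 - p.1 1 1) / p.1 0 1 * (k.1 0 1 * k.1 1 1) -
        p.1 1 0 / p.1 0 1 * (k.1 0 1 * k.1 0 1) := by
  have hscalar : p.1 ∉ range (scalar (Fin 2)) := fun ⟨z, hz⟩ ↦ hp (by simp [← hz])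
  obtain ⟨x, y, hxy⟩ := exists_eq_scalar_add_smul_of_commute hscalar (SL2C.commute_val_iff.mpr h)
  rw [mul_geoFlow_val] at hxy
  have hexp : Complex.exp (2 * t) = Complex.exp t * Complex.exp t := by
    rw [← Complex.exp_add, two_mul]
  have hne := Complex.exp_ne_zero t
  have h00 : Complex.exp t * k.1 0 0 = x + y * p.1 0 0 := by simpa using congrFun₂ hxy 0 0
  have h01 : (Complex.exp t)⁻¹ * k.1 0 1 = y * p.1 0 1 := by simpa using congrFun₂ hxy 0 1
  have h10 : Complex.exp t * k.1 1 0 = y * p.1 1 0 := by simpa using congrFun₂ hxy 1 0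
  have h11 : (Complex.exp t)⁻¹ * k.1 1 1 = x + y * p.1 1 1 := by simpa using congrFun₂ hxy 1 1
  have hdet := (det_fin_two k.1).symm.trans k.2
  have hy : Complex.exp t * y = k.1 0 1 / p.1 0 1 := by
    rw [eq_div_iff hp, mul_assoc, ← h01, mul_inv_cancel_left₀ hne]
  have ha : Complex.exp (2 * t) * k.1 0 0 =
      k.1 1 1 + k.1 0 1 / p.1 0 1 * (p.1 0 0 - p.1 1 1) := by
    rw [← hy, hexp, ← mul_inv_cancel_left₀ hne (k.1 1 1)]
    linear_combination Complex.exp t * (h00 - h11)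
  have hc : Complex.exp (2 * t) * k.1 1 0 = k.1 0 1 / p.1 0 1 * p.1 1 0 := by
    rw [← hy, hexp]
    linear_combination Complex.exp t * h10
  linear_combination k.1 1 1 * ha - k.1 0 1 * hc - Complex.exp (2 * t) * hdet

theorem eventually_not_commute_mul_geoFlow {K : Set SL2C} (hK : IsCompact K) {p : SL2C}
    (hp : p.1 0 1 ≠ 0) : ∀ᶠ t in atTop, ∀ k ∈ K, ¬Commute p (k * geoFlow t) := by
  obtain ⟨R, hR⟩ := exists_forall_norm_apply_le hK
  have htop : Tendsto (fun t ↦ Real.exp (2 * t)) atTop atTop :=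
    Real.tendsto_exp_atTop.comp (tendsto_id.const_mul_atTop two_pos)
  filter_upwards [htop.eventually_gt_atTop (R * R + ‖(p.1 0 0 - p.1 1 1) / p.1 0 1‖ * (R * R) +
    ‖p.1 1 0 / p.1 0 1‖ * (R * R))] with t ht k hk hcomm
  refine ht.not_ge ?_
  have hR0 : 0 ≤ R := (norm_nonneg _).trans (hR k hk 0 0)
  have h01 := hR k hk 0 1
  have h11 := hR k hk 1 1
  calc Real.exp (2 * t) = ‖Complex.exp (2 * t)‖ := by simp [Complex.norm_exp]
    _ ≤ ‖k.1 1 1 * k.1 1 1‖ + ‖(p.1 0 0 - p.1 1 1) / p.1 0 1 * (k.1 0 1 * k.1 1 1)‖ +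
        ‖p.1 1 0 / p.1 0 1 * (k.1 0 1 * k.1 0 1)‖ := by
      rw [exp_two_mul_eq_of_commute hp hcomm]
      exact (norm_sub_le _ _).trans (by gcongr; exact norm_add_le _ _)
    _ ≤ _ := by simp only [norm_mul]; gcongr

theorem conjSL2_eq_or_eq_neg {p q m : SL2C} (hp : p ∈ realSL2) (hq : q ∈ realSL2)
    (hpq : ¬Commute p q) (hmp : m * p * m⁻¹ ∈ realSL2) (hmq : m * q * m⁻¹ ∈ realSL2) :
    conjSL2 m = m ∨ conjSL2 m = -m := by
  have hcomm {r : SL2C} (hr : r ∈ realSL2) (hmr : m * r * m⁻¹ ∈ realSL2) :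
      Commute (m⁻¹ * conjSL2 m) r := by
    rw [mem_realSL2_iff] at hr hmr
    rw [map_mul, map_mul, map_inv, hr] at hmr
    calc m⁻¹ * conjSL2 m * r = m⁻¹ * (conjSL2 m * r * (conjSL2 m)⁻¹) * conjSL2 m := by group
      _ = r * (m⁻¹ * conjSL2 m) := by rw [hmr]; group
  have hcenter : m⁻¹ * conjSL2 m ∈ Subgroup.center SL2C :=
    by_contra fun h ↦ hpq (commute_trans_of_notMem_center h (hcomm hp hmp) (hcomm hq hmq))
  refine (mem_center_iff_eq_one_or_neg_one.mp hcenter).imp (fun h ↦ ?_) fun h ↦ ?_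
  · rw [inv_mul_eq_iff_eq_mul.mp h, mul_one]
  · rw [inv_mul_eq_iff_eq_mul.mp h, mul_neg_one]

/-- `diag(i, -i)`, which normalizes `SL(2,ℝ)`; the matrices equal to minus their complex conjugate
form its coset. -/
def diagI : SL2C := ⟨!![Complex.I, 0; 0, -Complex.I], by simp [det_fin_two_of]⟩

theorem conjSL2_diagI : conjSL2 diagI = -diagI := by
  ext i j
  rw [conjSL2_apply, Matrix.SpecialLinearGroup.coe_neg]
  fin_cases i <;> fin_cases j <;> simp [diagI]

theorem mul_inv_mem_realSL2_of_conjSL2_eq_neg {m n : SL2C} (hm : conjSL2 m = -m)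
    (hn : conjSL2 n = -n) : m * n⁻¹ ∈ realSL2 := by
  rw [mem_realSL2_iff, map_mul, map_inv, hm, hn, inv_neg, neg_mul_neg]

end RealSubgroup

section ClosedOrbits

theorem exists_isCompact_subset_image {Y Z : Type*} [TopologicalSpace Y] [TopologicalSpace Z]
    [WeaklyLocallyCompactSpace Y] {f : Y → Z} (hf : IsOpenMap f) {C : Set Z} (hC : IsCompact C)
    (hCf : C ⊆ range f) : ∃ K, IsCompact K ∧ C ⊆ f '' K := by
  refine hC.induction_on (p := fun s ↦ ∃ K, IsCompact K ∧ s ⊆ f '' K)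
    ⟨∅, isCompact_empty, empty_subset _⟩ (fun s t hst ⟨K, hK, htK⟩ ↦ ⟨K, hK, hst.trans htK⟩)
    (fun s t ⟨K, hK, hsK⟩ ⟨L, hL, htL⟩ ↦
      ⟨K ∪ L, hK.union hL, (union_subset_union hsK htL).trans_eq (image_union f K L).symm⟩)
    fun z hz ↦ ?_
  obtain ⟨y, rfl⟩ := hCf hz
  obtain ⟨K, hK, hyK⟩ := exists_compact_mem_nhds y
  exact ⟨f '' K, mem_nhdsWithin_of_mem_nhds (hf.image_mem_nhds hyK), K, hK, Subset.rfl⟩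

theorem exists_isCompact_inter_orbit_subset {H X : Type*} [Group H] [TopologicalSpace H]
    [IsTopologicalGroup H] [LocallyCompactSpace H] [SigmaCompactSpace H] [TopologicalSpace X]
    [T2Space X] [LocallyCompactSpace X] [MulAction H X] [ContinuousSMul H X] {x : X}
    (hx : IsClosed (MulAction.orbit H x)) {C : Set X} (hC : IsCompact C) :
    ∃ K : Set H, IsCompact K ∧ C ∩ MulAction.orbit H x ⊆ (· • x) '' K := by
  have : LocallyCompactSpace (MulAction.orbit H x) :=
    hx.isClosedEmbedding_subtypeVal.locallyCompactSpace
  have : ContinuousSMul H (MulAction.orbit H x) :=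
    ⟨.subtype_mk (continuous_fst.smul (continuous_subtype_val.comp continuous_snd)) _⟩
  let x' : MulAction.orbit H x := ⟨x, MulAction.mem_orbit_self x⟩
  -- The orbit is locally compact, so by Baire its orbit map is open.
  obtain ⟨K, hK, hCK⟩ := exists_isCompact_subset_image (isOpenMap_smul_of_sigmaCompact (G := H) x')
    (hx.isClosedEmbedding_subtypeVal.isCompact_preimage hC)
    (fun z _ ↦ MulAction.exists_smul_eq H x' z)
  refine ⟨K, hK, fun z hz ↦ ?_⟩
  obtain ⟨k, hk, hkz⟩ := hCK (show (⟨z, hz.2⟩ : MulAction.orbit H x) ∈ Subtype.val ⁻¹' C from hz.1)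
  exact ⟨k, hk, congrArg Subtype.val hkz⟩

theorem mem_stabilizer_smul_iff {G X : Type*} [Group G] [MulAction G X] {g p : G} {x : X} :
    p ∈ MulAction.stabilizer G (g • x) ↔ g⁻¹ * p * g ∈ MulAction.stabilizer G x := by
  simp only [MulAction.mem_stabilizer_iff, mul_smul, inv_smul_eq_iff]

theorem orbit_smul_eq_of_mem {G X : Type*} [Group G] [MulAction G X] {H : Subgroup G} {h : G}
    (hh : h ∈ H) (x : X) : MulAction.orbit H (h • x) = MulAction.orbit H x :=
  MulAction.orbit_smul (⟨h, hh⟩ : H) x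

theorem finite_setOf_orbit_of_not_commute {X : Type*} [MulAction SL2C X] (x : X)
    (p q : SL2C) :
    ((fun g : SL2C ↦ MulAction.orbit realSL2 (g • x)) '' {g | g * p * g⁻¹ ∈ realSL2 ∧
      g * q * g⁻¹ ∈ realSL2 ∧ ¬Commute p q}).Finite := by
  rcases eq_empty_or_nonempty {g : SL2C | g * p * g⁻¹ ∈ realSL2 ∧ g * q * g⁻¹ ∈ realSL2 ∧
    ¬Commute p q} with hempty | ⟨g₀, hp₀, hq₀, hpq⟩
  · simp [hempty]
  refine (toFinite {MulAction.orbit realSL2 (g₀ • x),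
    MulAction.orbit realSL2 (diagI • g₀ • x)}).subset ?_
  rintro _ ⟨g, ⟨hp, hq, -⟩, rfl⟩
  have hconj (r : SL2C) : g * g₀⁻¹ * (g₀ * r * g₀⁻¹) * (g * g₀⁻¹)⁻¹ = g * r * g⁻¹ := by group
  have hsmul : g • x = (g * g₀⁻¹) • g₀ • x := by simp [mul_smul]
  rcases conjSL2_eq_or_eq_neg hp₀ hq₀ ((Commute.conj_iff g₀).not.mpr hpq)
    ((hconj p).symm ▸ hp) ((hconj q).symm ▸ hq) with h | h
  · left
    simp only [hsmul]
    exact orbit_smul_eq_of_mem (mem_realSL2_iff.mpr h) _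
  · right
    have hdiag : g • x = (g * g₀⁻¹ * diagI⁻¹) • diagI • g₀ • x := by simp [mul_smul]
    simp only [hdiag]
    exact orbit_smul_eq_of_mem (mul_inv_mem_realSL2_of_conjSL2_eq_neg h conjSL2_diagI) _

variable {X : Type*} [TopologicalSpace X] [T2Space X] [LocallyCompactSpace X]
  [MulAction SL2C X] [ContinuousSMul SL2C X]
  [∀ x : X, DiscreteTopology (MulAction.stabilizer SL2C x)]

theorem exists_frequently_mul_geoFlow_mem_stabilizer {x : X}
    (hthick : ∀ W ∈ 𝓝 (1 : SL2C), ∃ C : Set X, IsCompact C ∧ thickPart X W ⊆ C)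
    (hx : IsClosed (MulAction.orbit realSL2 x))
    (hgood : ∀ p ∈ MulAction.stabilizer SL2C x, p.1 0 1 = 0 → p ∈ Subgroup.center SL2C) :
    ∃ K : Set SL2C, IsCompact K ∧ ∃ᶠ t in atTop, ∃ k ∈ K,
      k * geoFlow t ∈ MulAction.stabilizer SL2C x ⊓ realSL2 := by
  obtain ⟨W, hWo, h1W, hWz, hWc, L, hL, hWL⟩ := exists_isOpen_isZassenhaus
  obtain ⟨C, hC, hWC⟩ := hthick W (hWo.mem_nhds h1W)
  obtain ⟨K, hK, hCK⟩ := exists_isCompact_inter_orbit_subset hx hC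
  refine ⟨(fun k : realSL2 ↦ (k : SL2C)⁻¹) '' K, hK.image (by fun_prop),
    (frequently_geoFlow_conj_notMem (MulAction.stabilizer SL2C x) hWo hWz hWc hL hWL hgood).mono
      fun t ht ↦ ?_⟩
  have hmem : geoFlow t • x ∈ thickPart X W := by
    intro q hq hqW
    have hconj : geoFlow t * ((geoFlow t)⁻¹ * q * geoFlow t) * (geoFlow t)⁻¹ = q := by group
    rw [← hconj, ht _ (mem_stabilizer_smul_iff.mp hq) (by rwa [hconj]), mul_one, mul_inv_cancel]
  obtain ⟨k, hk, hkt⟩ := hCK ⟨hWC hmem, ⟨geoFlow t, geoFlow_mem_realSL2 t⟩, rfl⟩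
  have hstab : (k : SL2C)⁻¹ * geoFlow t ∈ MulAction.stabilizer SL2C x := by
    rw [MulAction.mem_stabilizer_iff, mul_smul, inv_smul_eq_iff]
    exact hkt.symm
  exact ⟨_, mem_image_of_mem _ hk, hstab,
    realSL2.mul_mem (realSL2.inv_mem k.2) (geoFlow_mem_realSL2 t)⟩

theorem exists_not_commute_of_forall_mem_center {x : X}
    (hthick : ∀ W ∈ 𝓝 (1 : SL2C), ∃ C : Set X, IsCompact C ∧ thickPart X W ⊆ C)
    (hx : IsClosed (MulAction.orbit realSL2 x))
    (hgood : ∀ p ∈ MulAction.stabilizer SL2C x, p.1 0 1 = 0 → p ∈ Subgroup.center SL2C) :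
    ∃ p ∈ MulAction.stabilizer SL2C x ⊓ realSL2, ∃ q ∈ MulAction.stabilizer SL2C x ⊓ realSL2,
      ¬Commute p q := by
  obtain ⟨K, hK, hfreq⟩ := exists_frequently_mul_geoFlow_mem_stabilizer hthick hx hgood
  have hexists {r : SL2C} (hr : r.1 0 1 ≠ 0) :
      ∃ p ∈ MulAction.stabilizer SL2C x ⊓ realSL2, ¬Commute r p := by
    obtain ⟨t, ⟨k, hk, hkt⟩, ht⟩ :=
      (hfreq.and_eventually (eventually_not_commute_mul_geoFlow hK hr)).exists
    exact ⟨_, hkt, ht k hk⟩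
  obtain ⟨p, hp, hpu⟩ := hexists (r := uMat 1) (by simp [uMat])
  have hpc : p ∉ Subgroup.center SL2C := fun hpc ↦ hpu (Subgroup.mem_center_iff.mp hpc _)
  obtain ⟨q, hq, hpq⟩ := hexists (mt (hgood p hp.1) hpc)
  exact ⟨p, hp, q, hq, hpq⟩

theorem exists_not_commute_of_isClosed_orbit
    (hthick : ∀ W ∈ 𝓝 (1 : SL2C), ∃ C : Set X, IsCompact C ∧ thickPart X W ⊆ C) {x : X}
    (hx : IsClosed (MulAction.orbit realSL2 x)) :
    ∃ p ∈ MulAction.stabilizer SL2C x ⊓ realSL2, ∃ q ∈ MulAction.stabilizer SL2C x ⊓ realSL2,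
      ¬Commute p q := by
  have : Countable (MulAction.stabilizer SL2C x) := countable_of_Lindelof_of_discrete
  obtain ⟨h, hh, hgood⟩ :=
    exists_mem_realSL2_forall_mem_center (MulAction.stabilizer SL2C x)
  obtain ⟨p, hp, q, hq, hpq⟩ := exists_not_commute_of_forall_mem_center (x := h • x) hthick
    (by rwa [orbit_smul_eq_of_mem hh]) fun p hp hp01 ↦ by
      have hc := hgood _ (mem_stabilizer_smul_iff.mp hp) (by simpa [mul_assoc] using hp01)
      simpa [mul_assoc] using (inferInstance : (Subgroup.center SL2C).Normal).conj_mem _ hc h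
  have hmem {r : SL2C} (hr : r ∈ MulAction.stabilizer SL2C (h • x) ⊓ realSL2) :
      h⁻¹ * r * h ∈ MulAction.stabilizer SL2C x ⊓ realSL2 :=
    ⟨mem_stabilizer_smul_iff.mp hr.1,
      realSL2.mul_mem (realSL2.mul_mem (realSL2.inv_mem hh) hr.2) hh⟩
  refine ⟨_, hmem hp, _, hmem hq, ?_⟩
  simpa using (Commute.conj_iff h⁻¹).not.mpr hpq

theorem countable_setOf_isClosed_orbit_of_thickPart_subset_isCompact
    [MulAction.IsPretransitive SL2C X]
    (hthick : ∀ W ∈ 𝓝 (1 : SL2C), ∃ C : Set X, IsCompact C ∧ thickPart X W ⊆ C) :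
    {s : Set X | ∃ x, s = MulAction.orbit realSL2 x ∧ IsClosed s}.Countable := by
  rcases isEmpty_or_nonempty X with _ | ⟨⟨x₀⟩⟩
  · exact countable_empty.mono fun s ⟨x, _⟩ ↦ isEmptyElim x
  have : Countable (MulAction.stabilizer SL2C x₀) := countable_of_Lindelof_of_discrete
  refine (countable_iUnion fun p : MulAction.stabilizer SL2C x₀ × MulAction.stabilizer SL2C x₀ ↦
    (finite_setOf_orbit_of_not_commute x₀ p.1.1 p.2.1).countable).mono ?_
  rintro _ ⟨x, rfl, hx⟩
  obtain ⟨p, hp, q, hq, hpq⟩ := exists_not_commute_of_isClosed_orbit hthick hx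
  obtain ⟨g, rfl⟩ := MulAction.exists_smul_eq SL2C x₀ x
  have hconj {r : SL2C} (hr : r ∈ MulAction.stabilizer SL2C (g • x₀) ⊓ realSL2) :
      g * (g⁻¹ * r * g) * g⁻¹ ∈ realSL2 := by simpa [mul_assoc] using hr.2
  refine mem_iUnion.mpr ⟨(⟨_, mem_stabilizer_smul_iff.mp hp.1⟩,
    ⟨_, mem_stabilizer_smul_iff.mp hq.1⟩), g, ⟨hconj hp, hconj hq, ?_⟩, rfl⟩
  simpa using (Commute.conj_iff g⁻¹).not.mpr hpq

theorem countable_setOf_isClosed_orbit [MulAction.IsPretransitive SL2C X]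
    [SecondCountableTopology X] [MeasurableSpace X] [BorelSpace X] (μ : Measure X)
    [IsFiniteMeasure μ] [NeZero μ] [SMulInvariantMeasure SL2C X μ] :
    {s : Set X | ∃ x, s = MulAction.orbit realSL2 x ∧ IsClosed s}.Countable := by
  borelize SL2C
  obtain ⟨x⟩ : Nonempty X := μ.nonempty_of_neZero
  exact countable_setOf_isClosed_orbit_of_thickPart_subset_isCompact fun W hW ↦
    exists_isCompact_thickPart_subset μ x hW

end ClosedOrbits

section HomogeneousSpace

theorem discreteTopology_comap_of_finite_ker {G H : Type*} [Group G] [TopologicalSpace G]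
    [IsTopologicalGroup G] [T1Space G] [Group H] [TopologicalSpace H] {f : G →* H}
    (hf : Continuous f) (hker : (f.ker : Set G).Finite) (Λ : Subgroup H) [DiscreteTopology Λ] :
    DiscreteTopology (Λ.comap f) := by
  let fΛ : Λ.comap f → Λ := MapsTo.restrict f (Λ.comap f) Λ fun _ ↦ id
  have hone : fΛ 1 = 1 := Subtype.ext (map_one f)
  have hopen : IsOpen (fΛ ⁻¹' {1}) := (isOpen_discrete _).preimage (hf.restrict _)
  have hfin : (fΛ ⁻¹' {1} \ {1}).Finite := by
    refine ((hker.preimage Subtype.val_injective.injOn).subset fun p hp ↦ ?_).sdiff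
    exact congrArg Subtype.val hp
  refine discreteTopology_of_isOpen_singleton_one ?_
  have hmem : {1} ⊆ fΛ ⁻¹' {1} := singleton_subset_iff.mpr (mem_singleton_iff.mpr hone)
  have hsing : {1} = fΛ ⁻¹' {1} \ (fΛ ⁻¹' {1} \ {1}) := by
    rw [sdiff_sdiff_right_self]
    exact (inter_eq_right.mpr hmem).symm
  rw [hsing]
  exact hopen.sdiff hfin.isClosed

theorem finite_ker_pr : (pr.ker : Set SL2C).Finite := by
  rw [pr, QuotientGroup.ker_mk']
  exact (toFinite {1, -1}).subset fun _ ↦ mem_center_iff_eq_one_or_neg_one.mp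

theorem isOpenQuotientMap_pr : IsOpenQuotientMap pr := QuotientGroup.isOpenQuotientMap_mk

theorem isOpenQuotientMap_mkX : IsOpenQuotientMap (mkX Γ) :=
  MulAction.isOpenQuotientMap_quotientMk (Γ := Γ) (T := PSL2C)

theorem isOpenQuotientMap_mkX_comp_pr : IsOpenQuotientMap (mkX Γ ∘ pr) :=
  (isOpenQuotientMap_mkX Γ).comp isOpenQuotientMap_pr

theorem mkX_eq_mkX_iff {a b : PSL2C} : mkX Γ a = mkX Γ b ↔ b * a⁻¹ ∈ Γ := by
  rw [mkX, mkX, Quotient.eq'', QuotientGroup.rightRel_apply]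

theorem act_mkX (a g : PSL2C) : act Γ (mkX Γ a) g = mkX Γ (a * g) := rfl

/-- The right action of `PSL(2,ℂ)` on `Γ\G` turned into a left action of `SL(2,ℂ)` through
inversion. -/
instance : MulAction SL2C (XΓ Γ) where
  smul g x := act Γ x (pr g⁻¹)
  one_smul x := by
    obtain ⟨a, rfl⟩ := (isOpenQuotientMap_mkX Γ).surjective x
    exact congrArg (mkX Γ) (by simp)
  mul_smul g h x := by
    obtain ⟨a, rfl⟩ := (isOpenQuotientMap_mkX Γ).surjective x
    exact congrArg (mkX Γ) (by simp [mul_assoc])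

theorem smul_eq_act (g : SL2C) (x : XΓ Γ) : g • x = act Γ x (pr g⁻¹) := rfl

theorem smul_mkX_pr (g a : SL2C) : g • mkX Γ (pr a) = mkX Γ (pr (a * g⁻¹)) := by
  rw [smul_eq_act, act_mkX, map_mul]

instance : ContinuousSMul SL2C (XΓ Γ) where
  continuous_smul := by
    rw [← (IsOpenQuotientMap.id.prodMap (isOpenQuotientMap_mkX_comp_pr Γ)).continuous_comp_iff]
    have hcont : Continuous fun p : SL2C × SL2C ↦ p.2 * p.1⁻¹ := by fun_prop
    exact ((isOpenQuotientMap_mkX_comp_pr Γ).continuous.comp hcont).congr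
      fun p ↦ (smul_mkX_pr Γ p.1 p.2).symm

instance : MulAction.IsPretransitive SL2C (XΓ Γ) where
  exists_smul_eq x y := by
    obtain ⟨a, rfl⟩ := (isOpenQuotientMap_mkX_comp_pr Γ).surjective x
    obtain ⟨b, rfl⟩ := (isOpenQuotientMap_mkX_comp_pr Γ).surjective y
    exact ⟨b⁻¹ * a, by simp [smul_mkX_pr]⟩

instance : LocallyCompactSpace (XΓ Γ) := (isOpenQuotientMap_mkX_comp_pr Γ).locallyCompactSpace

instance : SecondCountableTopology (XΓ Γ) :=
  (isOpenQuotientMap_mkX_comp_pr Γ).isQuotientMap.secondCountableTopology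
    (isOpenQuotientMap_mkX_comp_pr Γ).isOpenMap

instance [DiscreteTopology Γ] : T2Space (XΓ Γ) := by
  have := discreteTopology_comap_of_finite_ker isOpenQuotientMap_pr.continuous finite_ker_pr Γ
  rw [t2Space_iff_of_isOpenQuotientMap (isOpenQuotientMap_mkX_comp_pr Γ)]
  have hclosed : IsClosed (Γ.comap pr : Set SL2C) := Subgroup.isClosed_of_discrete
  convert! hclosed.preimage (f := fun p : SL2C × SL2C ↦ p.2 * p.1⁻¹) (by fun_prop) using 1
  ext p
  simp [mkX_eq_mkX_iff]

instance [DiscreteTopology Γ] (x : XΓ Γ) :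
    DiscreteTopology (MulAction.stabilizer SL2C x) := by
  obtain ⟨a, rfl⟩ := (isOpenQuotientMap_mkX_comp_pr Γ).surjective x
  let f : SL2C →* PSL2C := pr.comp (MulAut.conj a).toMonoidHom
  have hcont : Continuous f := isOpenQuotientMap_pr.continuous.comp
    (show Continuous fun g ↦ a * g * a⁻¹ by fun_prop)
  have hker : (f.ker : Set SL2C).Finite :=
    Finite.preimage (f := MulAut.conj a) (MulAut.conj a).injective.injOn finite_ker_pr
  have hstab : MulAction.stabilizer SL2C ((mkX Γ ∘ pr) a) = Γ.comap f := by
    ext g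
    simp [MulAction.mem_stabilizer_iff, smul_mkX_pr, mkX_eq_mkX_iff, f, mul_assoc]
  rw [hstab]
  exact discreteTopology_comap_of_finite_ker hcont hker Γ

theorem orb_Hset_eq_orbit_realSL2 (x : XΓ Γ) : orb Γ x Hset = MulAction.orbit realSL2 x := by
  ext y
  constructor
  · rintro ⟨_, ⟨g, rfl⟩, rfl⟩
    refine ⟨⟨_, g⁻¹, rfl⟩, ?_⟩
    change act Γ x (pr (Matrix.SpecialLinearGroup.map (algebraMap ℝ ℂ) g⁻¹)⁻¹) = _
    rw [← map_inv, inv_inv]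
  · rintro ⟨⟨_, g, rfl⟩, rfl⟩
    exact ⟨_, ⟨g⁻¹, rfl⟩, by rw [map_inv]; rfl⟩

theorem IsLattice.exists_smulInvariantMeasure {Γ : Subgroup PSL2C} (hΓ : IsLattice Γ) :
    letI : MeasurableSpace (XΓ Γ) := borel _
    ∃ μ : Measure (XΓ Γ), IsFiniteMeasure μ ∧ NeZero μ ∧ SMulInvariantMeasure SL2C (XΓ Γ) μ := by
  borelize (XΓ Γ)
  obtain ⟨μ, hμ0, hμ, hinv⟩ := hΓ
  refine ⟨μ, hμ, ⟨hμ0⟩, ⟨fun g s hs ↦ ?_⟩⟩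
  have hg : Measurable (g • · : XΓ Γ → XΓ Γ) := (continuous_const_smul g).measurable
  rw [← Measure.map_apply hg hs]
  exact congrArg (· s) (hinv (pr g⁻¹))

end HomogeneousSpace

/-- If `Γ` is a lattice in `PSL(2,ℂ)`, then the collection of closed `H`-orbits
in `Γ\G` is countable. -/
theorem countably_many_closed_H_orbits
    (Γ : Subgroup PSL2C) (hdisc : DiscreteTopology Γ) (hlat : IsLattice Γ) :
    Set.Countable {s : Set (XΓ Γ) | ∃ x : XΓ Γ, s = orb Γ x Hset ∧ IsClosed s} := by
  borelize (XΓ Γ)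
  obtain ⟨μ, _, _, _⟩ := hlat.exists_smulInvariantMeasure
  simp only [orb_Hset_eq_orbit_realSL2]
  exact countable_setOf_isClosed_orbit μ

end
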